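/- Assume ‖Σ*‖ ∨ ‖Ω*‖ = O(1) and p³/n = o(1). Then for any sequence δ_n = o(1), sup over positive-definite p×p matrices Σ in the set {Σ : √(n/p)·‖Σ − Σ*‖_F² ∨ √p·‖Σ − Σ*‖_F ≤ δ_n} of the quantity √(n/p)·| log det(Σ) − log det(Σ̂) − tr((Σ − Σ̂)·Ω*) | is o_P(1), i.e., this supremum converges to 0 in probability under P_{Σ*}^n as n → ∞. -/

import Mathlib

/-!
Write `R S A = log det A - log det S - tr ((A - S) S⁻¹)`. The quantity to be bounded is
`R Σ* Σ - R Σ* Σ̂`. If `W` whitens `S`, i.e. `W S Wᵀ = 1`, then `R S A = log det (1 + M) - tr M`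
with `M = W (A - S) Wᵀ`. For `tr M² ≤ 1/4` the eigenvalues `λ` of `M` lie in `[-1/2, 1/2]`, where
`|log (1 + λ) - λ| ≤ λ²`, so `|R S A| ≤ tr M² ≤ (‖S⁻¹‖ ‖A - S‖_F)²`. At `A = Σ` this is handled by
the definition of the class over which the supremum runs; at `A = Σ̂` it remains to see
that `√(n/p) ‖Σ̂ - Σ*‖_F² = o_P(1)`. Its mean is `O(√(n/p) · p²/n) = O(√(p³/n))`, since each of the
`p²` entries of `Σ̂` is an average of `n` independent products of two coordinates, whose variance is
bounded through the fourth moments.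
-/

open MeasureTheory ProbabilityTheory Filter Matrix

noncomputable section

namespace BvMPaper

instance instMeasurableSpaceMatrix {m n : Type*} : MeasurableSpace (Matrix m n ℝ) :=
  inferInstanceAs (MeasurableSpace (m → n → ℝ))

/-- Spectral (operator) norm of a real square matrix. -/
def specNorm {p : ℕ} (A : Matrix (Fin p) (Fin p) ℝ) : ℝ :=
  ‖Matrix.toEuclideanCLM (𝕜 := ℝ) A‖

/-- Frobenius norm of a real matrix. -/
def frobNorm {p : ℕ} (A : Matrix (Fin p) (Fin p) ℝ) : ℝ :=
  Real.sqrt (∑ i, ∑ j, (A i j) ^ 2)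

/-- Euclidean norm of a vector. -/
def vecNorm {p : ℕ} (v : Fin p → ℝ) : ℝ :=
  Real.sqrt (∑ i, (v i) ^ 2)

open Classical in
/-- Square root of a positive semidefinite matrix (junk value `0` otherwise). -/
def matSqrt {p : ℕ} (A : Matrix (Fin p) (Fin p) ℝ) : Matrix (Fin p) (Fin p) ℝ :=
  if h : A.PosSemidef then
    h.1.eigenvectorUnitary.1 * Matrix.diagonal (Real.sqrt ∘ h.1.eigenvalues) *
      (star h.1.eigenvectorUnitary : Matrix (Fin p) (Fin p) ℝ)
  else 0

/-- Sample covariance matrix `(1/n) ∑ x_i x_iᵀ`. -/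
def sampleCov {n p : ℕ} (x : Fin n → Fin p → ℝ) : Matrix (Fin p) (Fin p) ℝ :=
  (n : ℝ)⁻¹ • ∑ i, Matrix.vecMulVec (x i) (x i)

/-- Centered Gaussian log-likelihood `l_n(Ω)`. -/
def logLik {n p : ℕ} (x : Fin n → Fin p → ℝ) (Ω : Matrix (Fin p) (Fin p) ℝ) : ℝ :=
  (n : ℝ) / 2 * Real.log Ω.det - (n : ℝ) / 2 * (Ω * sampleCov x).trace

/-- Posterior mass `Π(B | X^n)` of a set `B` of precision matrices. -/
def post {n p : ℕ} (prior : Measure (Matrix (Fin p) (Fin p) ℝ))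
    (x : Fin n → Fin p → ℝ) (B : Set (Matrix (Fin p) (Fin p) ℝ)) : ℝ :=
  (∫ Ω in B, Real.exp (logLik x Ω) ∂prior) / (∫ Ω, Real.exp (logLik x Ω) ∂prior)

/-- Standard normal cumulative distribution function `P(Z ≤ t)`. -/
def stdCDF (t : ℝ) : ℝ := (gaussianReal 0 1 (Set.Iic t)).toReal

/-- `μ` is the Gaussian distribution `N(m, S)` on `ℝ^p`, characterized through
one-dimensional projections. -/
def IsGaussianLaw {p : ℕ} (μ : Measure (Fin p → ℝ)) (m : Fin p → ℝ)
    (S : Matrix (Fin p) (Fin p) ℝ) : Prop :=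
  IsProbabilityMeasure μ ∧
    ∀ u : Fin p → ℝ,
      μ.map (fun x => ∑ i, u i * x i) =
        gaussianReal (∑ i, u i * m i) (Real.toNNReal (u ⬝ᵥ S.mulVec u))

/-- The law of an i.i.d. sample of size `n` from `μ`. -/
def iidLaw {β : Type*} [MeasurableSpace β] (n : ℕ) (μ : Measure β) :
    Measure (Fin n → β) :=
  Measure.pi fun _ => μ

/-- Convergence to `0` in probability (`o_P(1)`). -/
def oP {α : ℕ → Type*} [∀ n, MeasurableSpace (α n)] (P : ∀ n, Measure (α n))
    (f : ∀ n, α n → ℝ) : Prop :=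
  ∀ ε : ℝ, 0 < ε → Tendsto (fun n => P n {x | ε ≤ |f n x|}) atTop (nhds 0)

/-- Bounded sequence (`O(1)`). -/
def BigO1 (a : ℕ → ℝ) : Prop := ∃ C : ℝ, ∀ n, a n ≤ C

/-- Vanishing sequence (`o(1)`). -/
def SmallO1 (a : ℕ → ℝ) : Prop := Tendsto a atTop (nhds 0)

/-- The standard Gaussian distribution `N(0, I_p)` on `ℝ^p`. -/
def stdGaussVec (p : ℕ) : Measure (Fin p → ℝ) :=
  Measure.pi fun _ => gaussianReal 0 1

/-- The Wishart prior `W_p(I, p + b - 1)`: the law of `∑_{l=1}^{p+b-1} Z_l Z_lᵀ` for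
`Z_1, …, Z_{p+b-1}` i.i.d. `N(0, I_p)`. -/
def wishartPrior (p b : ℕ) : Measure (Matrix (Fin p) (Fin p) ℝ) :=
  (Measure.pi fun _ : Fin (p + b - 1) => stdGaussVec p).map
    (fun Z => ∑ l, Matrix.vecMulVec (Z l) (Z l))

/-- Lebesgue measure on symmetric `p × p` matrices (pushforward of Lebesgue measure on
the upper-triangular coordinates). -/
def symLebesgue (p : ℕ) : Measure (Matrix (Fin p) (Fin p) ℝ) :=
  Measure.map
    (fun f : ({ij : Fin p × Fin p // ij.1 ≤ ij.2} → ℝ) =>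
      Matrix.of fun i j =>
        if h : i ≤ j then f ⟨(i, j), h⟩ else f ⟨(j, i), le_of_not_ge h⟩)
    volume

/-- The support of the Gaussian prior with parameter `Λ`:
`{Ω : Ω = Ωᵀ, ‖Ω‖ < 2Λ, ‖Ω⁻¹‖ ≤ 2Λ}`. -/
def gaussSupport (p : ℕ) (L : ℝ) : Set (Matrix (Fin p) (Fin p) ℝ) :=
  {Ω | Ω.IsSymm ∧ specNorm Ω < 2 * L ∧ specNorm Ω⁻¹ ≤ 2 * L}

/-- The Gaussian prior with parameter `Λ`: density proportional to `exp(-‖Ω‖_F²/2)`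
with respect to Lebesgue measure on symmetric matrices, restricted to `gaussSupport p Λ`. -/
def gaussianPrior (p : ℕ) (L : ℝ) : Measure (Matrix (Fin p) (Fin p) ℝ) :=
  let μ := ((symLebesgue p).restrict (gaussSupport p L)).withDensity
    (fun Ω => ENNReal.ofReal (Real.exp (- frobNorm Ω ^ 2 / 2)))
  (μ Set.univ)⁻¹ • μ

open Classical in
/-- The eigenvalues of a symmetric matrix, sorted in increasing order (junk value `[]`
if the matrix is not symmetric). -/
def eigsAsc {p : ℕ} (A : Matrix (Fin p) (Fin p) ℝ) : List ℝ :=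
  if hA : A.IsHermitian then (Finset.univ.val.map hA.eigenvalues).sort (· ≤ ·) else []

/-- `lamK A m` is the `(m+1)`-th largest eigenvalue of `A` (`0`-indexed, so that
`lamK A 0 = λ_1(A)` is the largest eigenvalue and `lamK A (p-1) = λ_p(A)` the smallest). -/
def lamK {p : ℕ} (A : Matrix (Fin p) (Fin p) ℝ) (m : ℕ) : ℝ :=
  (eigsAsc A).getD (p - 1 - m) 0

/-- The eigengap of the eigenvalue `lamK A m` (`0`-indexed `m`). -/
def eigengap {p : ℕ} (A : Matrix (Fin p) (Fin p) ℝ) (m : ℕ) : ℝ :=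
  if m = 0 then |lamK A 0 - lamK A 1|
  else if m = p - 1 then |lamK A (p - 2) - lamK A (p - 1)|
  else min |lamK A m - lamK A (m - 1)| |lamK A m - lamK A (m + 1)|

section LogDet

variable {ι : Type*} [Fintype ι] [DecidableEq ι]

lemma abs_log_one_add_sub_self_le {x : ℝ} (hx : |x| ≤ 1 / 2) : |Real.log (1 + x) - x| ≤ x ^ 2 := by
  have hx' : ‖(x : ℂ)‖ ≤ 1 / 2 := by simpa using hx
  have h0 : 0 ≤ 1 + x := by linarith [(abs_le.1 hx).1]
  have hlog : Complex.log (1 + x) - x = ((Real.log (1 + x) - x : ℝ) : ℂ) := by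
    push_cast [Complex.ofReal_log h0]; rfl
  calc |Real.log (1 + x) - x| = ‖Complex.log (1 + x) - x‖ := by
        rw [hlog, Complex.norm_real, Real.norm_eq_abs]
    _ ≤ ‖(x : ℂ)‖ ^ 2 * (1 - ‖(x : ℂ)‖)⁻¹ / 2 :=
        Complex.norm_log_one_add_sub_self_le (by linarith)
    _ ≤ ‖(x : ℂ)‖ ^ 2 * 2 / 2 := by
        gcongr
        exact inv_le_of_inv_le₀ two_pos (by linarith)
    _ = x ^ 2 := by simp

lemma det_one_add_eq_prod_eigenvalues {𝕜 : Type*} [RCLike 𝕜] {M : Matrix ι ι 𝕜}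
    (hM : M.IsHermitian) : (1 + M).det = ∏ i, (1 + (hM.eigenvalues i : 𝕜)) := by
  conv_lhs => rw [hM.spectral_theorem]
  rw [← map_one (Unitary.conjStarAlgAut 𝕜 _ hM.eigenvectorUnitary), ← map_add,
    Unitary.conjStarAlgAut_apply, det_mul_right_comm,
    Unitary.mul_star_self_of_mem hM.eigenvectorUnitary.2, one_mul, ← diagonal_one, diagonal_add,
    det_diagonal]
  rfl

lemma trace_mul_self_eq_sum_eigenvalues_sq {𝕜 : Type*} [RCLike 𝕜] {M : Matrix ι ι 𝕜}
    (hM : M.IsHermitian) : (M * M).trace = ∑ i, (hM.eigenvalues i : 𝕜) ^ 2 := by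
  conv_lhs => rw [hM.spectral_theorem]
  rw [← map_mul, Unitary.conjStarAlgAut_apply, trace_mul_cycle, Unitary.coe_star_mul_self, one_mul,
    diagonal_mul_diagonal, trace_diagonal]
  simp [sq]

lemma abs_eigenvalues_le_half {M : Matrix ι ι ℝ} (hM : M.IsHermitian)
    (h : (M * M).trace ≤ 1 / 4) (i : ι) : |hM.eigenvalues i| ≤ 1 / 2 := by
  rw [trace_mul_self_eq_sum_eigenvalues_sq hM] at h
  have hi := Finset.single_le_sum (fun k _ => sq_nonneg (hM.eigenvalues k)) (Finset.mem_univ i)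
  refine abs_le_of_sq_le_sq (hi.trans (h.trans_eq ?_)) (by norm_num)
  norm_num

lemma one_add_eigenvalues_pos {M : Matrix ι ι ℝ} (hM : M.IsHermitian)
    (h : (M * M).trace ≤ 1 / 4) (i : ι) : 0 < 1 + hM.eigenvalues i := by
  linarith [(abs_le.1 (abs_eigenvalues_le_half hM h i)).1]

lemma det_one_add_pos {M : Matrix ι ι ℝ} (hM : M.IsHermitian) (h : (M * M).trace ≤ 1 / 4) :
    0 < (1 + M).det := by
  rw [det_one_add_eq_prod_eigenvalues hM]
  exact Finset.prod_pos fun i _ => one_add_eigenvalues_pos hM h i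

lemma abs_log_det_one_add_sub_trace_le {M : Matrix ι ι ℝ} (hM : M.IsHermitian)
    (h : (M * M).trace ≤ 1 / 4) : |Real.log (1 + M).det - M.trace| ≤ (M * M).trace := by
  have hne : ∀ i, 1 + hM.eigenvalues i ≠ 0 := fun i => (one_add_eigenvalues_pos hM h i).ne'
  calc |Real.log (1 + M).det - M.trace|
      = |∑ i, (Real.log (1 + hM.eigenvalues i) - hM.eigenvalues i)| := by
        rw [det_one_add_eq_prod_eigenvalues hM, hM.trace_eq_sum_eigenvalues,
          Finset.sum_sub_distrib]
        exact congrArg (|· - _|) (Real.log_prod fun i _ => hne i)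
    _ ≤ ∑ i, |Real.log (1 + hM.eigenvalues i) - hM.eigenvalues i| :=
        Finset.abs_sum_le_sum_abs _ _
    _ ≤ ∑ i, hM.eigenvalues i ^ 2 :=
        Finset.sum_le_sum fun i _ => abs_log_one_add_sub_self_le (abs_eigenvalues_le_half hM h i)
    _ = (M * M).trace := (trace_mul_self_eq_sum_eigenvalues_sq hM).symm

/-- The remainder of the first-order Taylor expansion of `log det` at `S`, where `log det` has
gradient `S⁻¹`. -/
def logDetRemainder (S A : Matrix ι ι ℝ) : ℝ :=
  Real.log A.det - Real.log S.det - ((A - S) * S⁻¹).trace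

lemma logDetRemainder_sub_logDetRemainder (S A B : Matrix ι ι ℝ) :
    logDetRemainder S A - logDetRemainder S B =
      Real.log A.det - Real.log B.det - ((A - B) * S⁻¹).trace := by
  simp only [logDetRemainder, sub_mul, trace_sub]
  ring

open scoped MatrixOrder Matrix.Norms.L2Operator in
lemma exists_whitening {S : Matrix ι ι ℝ} (hS : S.PosDef) :
    ∃ W : Matrix ι ι ℝ, W * S * Wᵀ = 1 ∧ Wᵀ * W = S⁻¹ := by
  obtain ⟨W, hW⟩ := CStarAlgebra.nonneg_iff_eq_star_mul_self.mp hS.inv.posSemidef.nonneg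
  rw [star_eq_conjTranspose, conjTranspose_eq_transpose_of_trivial] at hW
  have hWS : Wᵀ * (W * S) = 1 := by
    rw [← mul_assoc, ← hW, nonsing_inv_mul S hS.det_pos.ne'.isUnit]
  exact ⟨W, mul_eq_one_comm.1 hWS, hW.symm⟩

lemma det_eq_det_mul_det_one_add_whitened {S W : Matrix ι ι ℝ} (hW : W * S * Wᵀ = 1)
    (A : Matrix ι ι ℝ) : A.det = S.det * (1 + W * (A - S) * Wᵀ).det := by
  have hdet : W.det * S.det * W.det = 1 := by simpa using congrArg det hW
  have hA : 1 + W * (A - S) * Wᵀ = W * A * Wᵀ := by rw [← hW]; noncomm_ring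
  rw [hA, det_mul, det_mul, det_transpose]
  linear_combination (-A.det) * hdet

lemma trace_whitened {S W : Matrix ι ι ℝ} (hW : Wᵀ * W = S⁻¹) (D : Matrix ι ι ℝ) :
    (W * D * Wᵀ).trace = (D * S⁻¹).trace := by
  rw [trace_mul_cycle, hW, trace_mul_comm]

lemma trace_whitened_mul_self {S W : Matrix ι ι ℝ} (hW : Wᵀ * W = S⁻¹) (D : Matrix ι ι ℝ) :
    ((W * D * Wᵀ) * (W * D * Wᵀ)).trace = ((S⁻¹ * D) * (S⁻¹ * D)).trace := by
  rw [← hW, ← mul_assoc (W * D * Wᵀ), trace_mul_comm]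
  simp only [mul_assoc]

lemma abs_logDetRemainder_le_trace {S A : Matrix ι ι ℝ} (hS : S.PosDef) (hA : A.IsHermitian)
    (h : ((S⁻¹ * (A - S)) * (S⁻¹ * (A - S))).trace ≤ 1 / 4) :
    |logDetRemainder S A| ≤ ((S⁻¹ * (A - S)) * (S⁻¹ * (A - S))).trace := by
  obtain ⟨W, hWS, hW⟩ := exists_whitening hS
  have hM : (W * (A - S) * Wᵀ).IsHermitian := by
    simpa using isHermitian_mul_mul_conjTranspose W (hA.sub hS.1)
  rw [← trace_whitened_mul_self hW] at h ⊢
  have hR : logDetRemainder S A =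
      Real.log (1 + W * (A - S) * Wᵀ).det - (W * (A - S) * Wᵀ).trace := by
    rw [logDetRemainder, det_eq_det_mul_det_one_add_whitened hWS A,
      Real.log_mul hS.det_pos.ne' (det_one_add_pos hM h).ne', trace_whitened hW]
    ring
  rw [hR]
  exact abs_log_det_one_add_sub_trace_le hM h

end LogDet

section Norms

variable {p : ℕ}

lemma frobNorm_nonneg (A : Matrix (Fin p) (Fin p) ℝ) : 0 ≤ frobNorm A := Real.sqrt_nonneg _

lemma frobNorm_sq (A : Matrix (Fin p) (Fin p) ℝ) : frobNorm A ^ 2 = ∑ i, ∑ j, A i j ^ 2 :=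
  Real.sq_sqrt (by positivity)

lemma specNorm_nonneg (A : Matrix (Fin p) (Fin p) ℝ) : 0 ≤ specNorm A := norm_nonneg _

lemma sum_mulVec_sq_le (A : Matrix (Fin p) (Fin p) ℝ) (v : Fin p → ℝ) :
    ∑ i, (A *ᵥ v) i ^ 2 ≤ specNorm A ^ 2 * ∑ i, v i ^ 2 := by
  have h := pow_le_pow_left₀ (norm_nonneg _)
    ((toEuclideanCLM (𝕜 := ℝ) A).le_opNorm (WithLp.toLp 2 v)) 2
  simpa [specNorm, mul_pow, EuclideanSpace.real_norm_sq_eq] using h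

lemma apply_self_le_specNorm (A : Matrix (Fin p) (Fin p) ℝ) (i : Fin p) : A i i ≤ specNorm A := by
  have h : A i i ^ 2 ≤ specNorm A ^ 2 :=
    calc A i i ^ 2 = (A *ᵥ Pi.single i 1) i ^ 2 := by simp
      _ ≤ ∑ j, (A *ᵥ Pi.single i 1) j ^ 2 :=
          Finset.single_le_sum (f := fun j => (A *ᵥ Pi.single i 1) j ^ 2)
            (fun _ _ => sq_nonneg _) (Finset.mem_univ i)
      _ ≤ specNorm A ^ 2 := by
          simpa [Pi.single_apply] using sum_mulVec_sq_le A (Pi.single i 1)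
  exact (abs_le_of_sq_le_sq' h (specNorm_nonneg A)).2

lemma frobNorm_mul_le (A B : Matrix (Fin p) (Fin p) ℝ) :
    frobNorm (A * B) ≤ specNorm A * frobNorm B := by
  refine le_of_sq_le_sq ?_ (mul_nonneg (specNorm_nonneg A) (frobNorm_nonneg B))
  rw [mul_pow, frobNorm_sq, frobNorm_sq, Finset.sum_comm,
    Finset.sum_comm (f := fun i j => B i j ^ 2), Finset.mul_sum]
  exact Finset.sum_le_sum fun j _ => sum_mulVec_sq_le A fun i => B i j

lemma trace_mul_self_le_frobNorm_sq (A : Matrix (Fin p) (Fin p) ℝ) :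
    (A * A).trace ≤ frobNorm A ^ 2 := by
  have hsymm : ∑ i, ∑ j, A j i ^ 2 = ∑ i, ∑ j, A i j ^ 2 := Finset.sum_comm
  calc (A * A).trace = ∑ i, ∑ j, A i j * A j i := rfl
    _ ≤ ∑ i, ∑ j, (A i j ^ 2 + A j i ^ 2) / 2 := by
        gcongr with i _ j _
        linarith [two_mul_le_add_sq (A i j) (A j i)]
    _ = frobNorm A ^ 2 := by
        simp only [← Finset.sum_div, Finset.sum_add_distrib]
        rw [hsymm, frobNorm_sq, add_self_div_two]

lemma abs_logDetRemainder_le {S A : Matrix (Fin p) (Fin p) ℝ} (hS : S.PosDef) (hA : A.IsHermitian)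
    (h : specNorm S⁻¹ * frobNorm (A - S) ≤ 1 / 2) :
    |logDetRemainder S A| ≤ (specNorm S⁻¹ * frobNorm (A - S)) ^ 2 := by
  have hF := frobNorm_nonneg (S⁻¹ * (A - S))
  have htr : ((S⁻¹ * (A - S)) * (S⁻¹ * (A - S))).trace ≤ (specNorm S⁻¹ * frobNorm (A - S)) ^ 2 :=
    (trace_mul_self_le_frobNorm_sq _).trans (pow_le_pow_left₀ hF (frobNorm_mul_le _ _) 2)
  have hsq : (specNorm S⁻¹ * frobNorm (A - S)) ^ 2 ≤ (1 / 2) ^ 2 :=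
    pow_le_pow_left₀ (hF.trans (frobNorm_mul_le _ _)) h 2
  exact (abs_logDetRemainder_le_trace hS hA (by linarith)).trans htr

/-- The scaled error, uniform over the positive definite `S` in the `δ`-neighbourhood of `S₀`, of
approximating `log det S - log det T` by `tr ((S - T) S₀⁻¹)` for sample size `n`. As a supremum of
reals it has the junk value `0` when the set is unbounded. -/
def supLogDetError (n : ℕ) (δ : ℝ) (S₀ T : Matrix (Fin p) (Fin p) ℝ) : ℝ :=
  sSup ((fun S => Real.sqrt ((n : ℝ) / p) *
      |Real.log S.det - Real.log T.det - ((S - T) * S₀⁻¹).trace|) ''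
    {S | S.PosDef ∧
      max (Real.sqrt ((n : ℝ) / p) * frobNorm (S - S₀) ^ 2)
        (Real.sqrt p * frobNorm (S - S₀)) ≤ δ})

lemma abs_supLogDetError_le {n : ℕ} {δ K : ℝ} {S₀ T : Matrix (Fin p) (Fin p) ℝ} (hp : 0 < p)
    (hS₀ : S₀.PosDef) (hT : T.IsHermitian) (hK : specNorm S₀⁻¹ ≤ K) (hδ : K * |δ| ≤ 1 / 2)
    (hTS₀ : K * frobNorm (T - S₀) ≤ 1 / 2) :
    |supLogDetError n δ S₀ T| ≤
      K ^ 2 * (|δ| + Real.sqrt ((n : ℝ) / p) * frobNorm (T - S₀) ^ 2) := by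
  have hK₀ : 0 ≤ K := (specNorm_nonneg _).trans hK
  have remainder_le : ∀ A : Matrix (Fin p) (Fin p) ℝ, A.IsHermitian →
      K * frobNorm (A - S₀) ≤ 1 / 2 → |logDetRemainder S₀ A| ≤ (K * frobNorm (A - S₀)) ^ 2 := by
    intro A hA hAK
    have hle := mul_le_mul_of_nonneg_right hK (frobNorm_nonneg (A - S₀))
    exact (abs_logDetRemainder_le hS₀ hA (hle.trans hAK)).trans <|
      pow_le_pow_left₀ (mul_nonneg (specNorm_nonneg _) (frobNorm_nonneg _)) hle 2
  rw [supLogDetError, abs_of_nonneg (Real.sSup_nonneg (by rintro _ ⟨S, -, rfl⟩; positivity))]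
  refine Real.sSup_le ?_ (by positivity)
  rintro _ ⟨S, ⟨hS, hSδ⟩, rfl⟩
  obtain ⟨hSδ₁, hSδ₂⟩ := max_le_iff.1 (hSδ.trans (le_abs_self δ))
  have hSS₀ : frobNorm (S - S₀) ≤ |δ| :=
    (le_mul_of_one_le_left (frobNorm_nonneg _)
      (Real.one_le_sqrt.2 (by exact_mod_cast hp))).trans hSδ₂
  dsimp only
  rw [← logDetRemainder_sub_logDetRemainder S₀]
  calc Real.sqrt ((n : ℝ) / p) * |logDetRemainder S₀ S - logDetRemainder S₀ T|
      ≤ Real.sqrt ((n : ℝ) / p) * ((K * frobNorm (S - S₀)) ^ 2 + (K * frobNorm (T - S₀)) ^ 2) := by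
        gcongr
        refine (abs_sub _ _).trans (add_le_add (remainder_le S hS.1 ?_) (remainder_le T hT hTS₀))
        exact (mul_le_mul_of_nonneg_left hSS₀ hK₀).trans hδ
    _ = K ^ 2 * (Real.sqrt ((n : ℝ) / p) * frobNorm (S - S₀) ^ 2 +
          Real.sqrt ((n : ℝ) / p) * frobNorm (T - S₀) ^ 2) := by ring
    _ ≤ K ^ 2 * (|δ| + Real.sqrt ((n : ℝ) / p) * frobNorm (T - S₀) ^ 2) := by gcongr

end Norms

section IIDLaw

variable {β : Type*} [MeasurableSpace β] {μ : Measure β} [IsProbabilityMeasure μ] {f : β → ℝ}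

instance instIsProbabilityMeasureIIDLaw (n : ℕ) : IsProbabilityMeasure (iidLaw n μ) := by
  unfold iidLaw; infer_instance

lemma memLp_eval_iidLaw (hf : MemLp f 2 μ) {n : ℕ} (k : Fin n) :
    MemLp (fun x : Fin n → β => f (x k)) 2 (iidLaw n μ) :=
  hf.comp_measurePreserving (measurePreserving_eval (fun _ => μ) k)

lemma memLp_sampleMean (hf : MemLp f 2 μ) (n : ℕ) :
    MemLp (fun x : Fin n → β => (n : ℝ)⁻¹ * ∑ k, f (x k)) 2 (iidLaw n μ) :=
  (memLp_finsetSum _ fun k _ => memLp_eval_iidLaw hf k).const_mul _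

lemma integral_sampleMean (hf : MemLp f 2 μ) {n : ℕ} (hn : n ≠ 0) :
    ∫ x, (n : ℝ)⁻¹ * ∑ k, f (x k) ∂iidLaw n μ = ∫ y, f y ∂μ := by
  have heval : ∀ k : Fin n, ∫ x, f (x k) ∂iidLaw n μ = ∫ y, f y ∂μ := fun k =>
    integral_comp_eval (μ := fun _ : Fin n => μ) hf.1
  rw [integral_const_mul,
    integral_finsetSum _ fun k _ => (memLp_eval_iidLaw hf k).integrable one_le_two]
  simp [heval, hn]

lemma variance_sampleMean (hf : MemLp f 2 μ) (n : ℕ) :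
    Var[fun x => (n : ℝ)⁻¹ * ∑ k, f (x k); iidLaw n μ] = Var[f; μ] / n := by
  have hsum : Var[fun x => ∑ k, f (x k); iidLaw n μ] = n * Var[f; μ] := by
    have h := variance_sum_pi (μ := fun _ : Fin n => μ) (X := fun _ => f) fun _ => hf
    simpa [iidLaw, Finset.sum_fn] using h
  rw [variance_const_mul, hsum]
  field_simp

lemma integral_sampleMean_sub_sq (hf : MemLp f 2 μ) {n : ℕ} (hn : n ≠ 0) :
    ∫ x, ((n : ℝ)⁻¹ * ∑ k, f (x k) - ∫ y, f y ∂μ) ^ 2 ∂iidLaw n μ = Var[f; μ] / n := by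
  rw [← variance_sampleMean hf n,
    variance_eq_integral (memLp_sampleMean hf n).aestronglyMeasurable.aemeasurable,
    integral_sampleMean hf hn]

end IIDLaw

/-- `μ` is a probability measure on `ℝ^p` with (uncentered) second moment matrix `S`, under which
every coordinate has a finite fourth moment, bounded by `C`. -/
structure HasFourthMomentBound {p : ℕ} (μ : Measure (Fin p → ℝ)) (S : Matrix (Fin p) (Fin p) ℝ)
    (C : ℝ) : Prop where
  isProbabilityMeasure : IsProbabilityMeasure μ
  memLp_eval : ∀ i, MemLp (fun x => x i) 4 μ
  integral_mul : ∀ i j, ∫ x, x i * x j ∂μ = S i j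
  integral_pow_four_le : ∀ i, ∫ x, x i ^ 4 ∂μ ≤ C

section SampleCovariance

variable {p : ℕ}

lemma sampleCov_apply {n : ℕ} (x : Fin n → Fin p → ℝ) (i j : Fin p) :
    sampleCov x i j = (n : ℝ)⁻¹ * ∑ k, x k i * x k j := by
  simp [sampleCov, Matrix.sum_apply, vecMulVec_apply]

lemma isHermitian_sampleCov {n : ℕ} (x : Fin n → Fin p → ℝ) : (sampleCov x).IsHermitian := by
  ext i j
  simp [sampleCov_apply, mul_comm]

variable {μ : Measure (Fin p → ℝ)} {S : Matrix (Fin p) (Fin p) ℝ} {C : ℝ}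

namespace HasFourthMomentBound

lemma memLp_mul (h : HasFourthMomentBound μ S C) (i j : Fin p) :
    MemLp (fun x => x i * x j) 2 μ := by
  have : ENNReal.HolderTriple 4 4 2 := ⟨by
    rw [← ENNReal.toReal_eq_toReal_iff' (by simp) (by simp), ENNReal.toReal_add (by simp) (by simp)]
    norm_num⟩
  exact (h.memLp_eval j).mul (h.memLp_eval i)

lemma integrable_pow_four (h : HasFourthMomentBound μ S C) (i : Fin p) :
    Integrable (fun x => x i ^ 4) μ := by
  simpa [Even.pow_abs (show Even 4 by decide)] using
    (h.memLp_eval i).integrable_norm_pow (p := 4) (by simp)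

lemma variance_mul_le (h : HasFourthMomentBound μ S C) (i j : Fin p) :
    Var[fun x => x i * x j; μ] ≤ C := by
  have := h.isProbabilityMeasure
  have hi := (h.integrable_pow_four i).div_const 2
  have hj := (h.integrable_pow_four j).div_const 2
  calc Var[fun x => x i * x j; μ] ≤ ∫ x, (x i * x j) ^ 2 ∂μ :=
        variance_le_expectation_sq (by fun_prop)
    _ ≤ ∫ x, (x i ^ 4 / 2 + x j ^ 4 / 2) ∂μ := by
        refine integral_mono (h.memLp_mul i j).integrable_sq (hi.add hj) fun x => ?_
        change (x i * x j) ^ 2 ≤ x i ^ 4 / 2 + x j ^ 4 / 2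
        linarith [sq_nonneg (x i ^ 2 - x j ^ 2)]
    _ = (∫ x, x i ^ 4 ∂μ) / 2 + (∫ x, x j ^ 4 ∂μ) / 2 := by
        rw [integral_add hi hj, integral_div, integral_div]
    _ ≤ C := by linarith [h.integral_pow_four_le i, h.integral_pow_four_le j]

lemma integrable_sampleCov_sub_apply_sq (h : HasFourthMomentBound μ S C) (n : ℕ) (i j : Fin p) :
    Integrable (fun x => (sampleCov x - S) i j ^ 2) (iidLaw n μ) := by
  have := h.isProbabilityMeasure
  simp only [Matrix.sub_apply, sampleCov_apply]
  exact ((memLp_sampleMean (h.memLp_mul i j) n).sub (memLp_const (S i j))).integrable_sq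

lemma integral_sampleCov_sub_apply_sq_le (h : HasFourthMomentBound μ S C) {n : ℕ} (hn : n ≠ 0)
    (i j : Fin p) : ∫ x, (sampleCov x - S) i j ^ 2 ∂iidLaw n μ ≤ C / n := by
  have := h.isProbabilityMeasure
  simp only [Matrix.sub_apply, sampleCov_apply]
  rw [← h.integral_mul i j, integral_sampleMean_sub_sq (h.memLp_mul i j) hn]
  gcongr
  exact h.variance_mul_le i j

lemma integrable_frobNorm_sampleCov_sub_sq (h : HasFourthMomentBound μ S C) (n : ℕ) :
    Integrable (fun x => frobNorm (sampleCov x - S) ^ 2) (iidLaw n μ) := by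
  simp only [frobNorm_sq]
  exact integrable_finsetSum _ fun i _ => integrable_finsetSum _ fun j _ =>
    h.integrable_sampleCov_sub_apply_sq n i j

lemma integral_frobNorm_sampleCov_sub_sq_le (h : HasFourthMomentBound μ S C) {n : ℕ}
    (hn : n ≠ 0) : ∫ x, frobNorm (sampleCov x - S) ^ 2 ∂iidLaw n μ ≤ C * ((p : ℝ) ^ 2 / n) := by
  have hint := h.integrable_sampleCov_sub_apply_sq n
  calc ∫ x, frobNorm (sampleCov x - S) ^ 2 ∂iidLaw n μ
      = ∑ i, ∑ j, ∫ x, (sampleCov x - S) i j ^ 2 ∂iidLaw n μ := by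
        simp only [frobNorm_sq]
        rw [integral_finsetSum _ fun i _ => integrable_finsetSum _ fun j _ => hint i j]
        exact Finset.sum_congr rfl fun i _ => integral_finsetSum _ fun j _ => hint i j
    _ ≤ ∑ _i : Fin p, ∑ _j : Fin p, C / n := by
        gcongr with i _ j _
        exact h.integral_sampleCov_sub_apply_sq_le hn i j
    _ = C * ((p : ℝ) ^ 2 / n) := by
        simp only [Finset.sum_const, Finset.card_univ, Fintype.card_fin, nsmul_eq_mul]
        ring

end HasFourthMomentBound

end SampleCovariance

section ConvergenceInProbability

variable {α : ℕ → Type*} [∀ n, MeasurableSpace (α n)] {P : ∀ n, Measure (α n)} {f g : ∀ n, α n → ℝ}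

lemma oP_of_integral_le [∀ n, IsFiniteMeasure (P n)] {a : ℕ → ℝ} (hf : ∀ n x, 0 ≤ f n x)
    (hint : ∀ n, Integrable (f n) (P n)) (ha : SmallO1 a)
    (hle : ∀ᶠ n in atTop, ∫ x, f n x ∂P n ≤ a n) : oP P f := by
  intro ε hε
  have hlim : Tendsto (fun n => ENNReal.ofReal (a n / ε)) atTop (nhds 0) := by
    simpa using ENNReal.tendsto_ofReal (Tendsto.div_const ha ε)
  refine tendsto_of_tendsto_of_tendsto_of_le_of_le' tendsto_const_nhds hlim
    (Eventually.of_forall fun _ => zero_le) ?_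
  filter_upwards [hle] with n hn
  simp only [abs_of_nonneg (hf n _)]
  have markov := mul_meas_ge_le_integral_of_nonneg (ae_of_all _ (hf n)) (hint n) ε
  rw [← ofReal_measureReal]
  exact ENNReal.ofReal_le_ofReal ((le_div_iff₀' hε).2 (markov.trans hn))

lemma oP.of_abs_le_of_abs_lt {a : ℕ → ℝ} {η C : ℝ} (hg : oP P g) (ha : SmallO1 a) (hη : 0 < η)
    (hC : 0 < C) (hle : ∀ᶠ n in atTop, ∀ x, |g n x| < η → |f n x| ≤ C * (a n + |g n x|)) :
    oP P f := by
  intro ε hε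
  have hε' : 0 < ε / (2 * C) := by positivity
  refine tendsto_of_tendsto_of_tendsto_of_le_of_le' tendsto_const_nhds
    (hg (min η (ε / (2 * C))) (lt_min hη hε')) (Eventually.of_forall fun _ => zero_le) ?_
  filter_upwards [hle, ha.eventually_lt_const hε'] with n hn han
  refine measure_mono fun x (hx : ε ≤ |f n x|) => ?_
  change min η (ε / (2 * C)) ≤ |g n x|
  by_contra! hgx
  obtain ⟨hgη, hgε⟩ := lt_min_iff.1 hgx
  have hlt : |f n x| < ε :=
    calc |f n x| ≤ C * (a n + |g n x|) := hn x hgη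
      _ < C * (ε / (2 * C) + ε / (2 * C)) := by gcongr
      _ = ε := by field_simp; norm_num
  exact hx.not_gt hlt

end ConvergenceInProbability

lemma sqrt_div_mul_sq_div {a b : ℝ} (ha : 0 < a) (hb : 0 < b) :
    Real.sqrt (b / a) * (a ^ 2 / b) = Real.sqrt (a ^ 3 / b) := by
  rw [← Real.sqrt_sq (show 0 ≤ a ^ 2 / b by positivity), ← Real.sqrt_mul (by positivity)]
  congr 1
  field_simp

lemma eventually_le_of_pow_three_div {p : ℕ → ℕ} (hpn : SmallO1 fun n => (p n : ℝ) ^ 3 / n) :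
    ∀ᶠ n in atTop, p n ≤ n := by
  filter_upwards [hpn.eventually_lt_const one_pos, eventually_gt_atTop 0] with n hlt hn
  rw [div_lt_one (by exact_mod_cast hn)] at hlt
  exact (Nat.le_self_pow three_ne_zero _).trans (by exact_mod_cast hlt.le)

lemma oP_sqrt_div_mul_frobNorm_sampleCov_sub_sq {p : ℕ → ℕ} (hp : ∀ᶠ n in atTop, 0 < p n)
    {S : ∀ n, Matrix (Fin (p n)) (Fin (p n)) ℝ} {μ : ∀ n, Measure (Fin (p n) → ℝ)} {C : ℝ}
    (hμ : ∀ n, HasFourthMomentBound (μ n) (S n) C) (hpn : SmallO1 fun n => (p n : ℝ) ^ 3 / n) :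
    oP (fun n => iidLaw n (μ n))
      fun n x => Real.sqrt ((n : ℝ) / p n) * frobNorm (sampleCov x - S n) ^ 2 := by
  have (n : ℕ) := (hμ n).isProbabilityMeasure
  have hlim : SmallO1 fun n => C * Real.sqrt ((p n : ℝ) ^ 3 / n) := by
    simpa [SmallO1] using (Tendsto.sqrt hpn).const_mul C
  refine oP_of_integral_le (fun n x => by positivity)
    (fun n => ((hμ n).integrable_frobNorm_sampleCov_sub_sq n).const_mul _) hlim ?_
  filter_upwards [hp, eventually_gt_atTop 0] with n hp hn
  rw [integral_const_mul, ← sqrt_div_mul_sq_div (by exact_mod_cast hp) (by exact_mod_cast hn),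
    mul_left_comm]
  gcongr
  exact (hμ n).integral_frobNorm_sampleCov_sub_sq_le hn.ne'

theorem logdet_approx_linear_general (p : ℕ → ℕ) (hp : ∀ᶠ n in atTop, 0 < p n)
    (Sstar : ∀ n, Matrix (Fin (p n)) (Fin (p n)) ℝ) (hSpd : ∀ n, (Sstar n).PosDef)
    (μ : ∀ n, Measure (Fin (p n) → ℝ)) (C : ℝ)
    (hμ : ∀ n, HasFourthMomentBound (μ n) (Sstar n) C)
    (hbound : BigO1 fun n => specNorm (Sstar n)⁻¹)
    (hpn : SmallO1 fun n => (p n : ℝ) ^ 3 / n) (δ : ℕ → ℝ) (hδ : SmallO1 δ) :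
    oP (fun n => iidLaw n (μ n)) fun n x => supLogDetError n (δ n) (Sstar n) (sampleCov x) := by
  obtain ⟨K', hK'⟩ := hbound
  obtain ⟨K, hK, hK'K⟩ : ∃ K : ℝ, 0 < K ∧ K' ≤ K := ⟨max K' 1, by simp, le_max_left _ _⟩
  have hδ' : SmallO1 fun n => |δ n| := by simpa [SmallO1] using Tendsto.abs hδ
  refine (oP_sqrt_div_mul_frobNorm_sampleCov_sub_sq hp hμ hpn).of_abs_le_of_abs_lt hδ'
    (η := (1 / (2 * K)) ^ 2) (by positivity) (pow_pos hK 2) ?_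
  filter_upwards [hp, eventually_le_of_pow_three_div hpn,
    hδ'.eventually_lt_const (show 0 < 1 / (2 * K) by positivity)] with n hp hpn hδn x hx
  have hnonneg : 0 ≤ Real.sqrt ((n : ℝ) / p n) * frobNorm (sampleCov x - Sstar n) ^ 2 := by
    positivity
  rw [abs_of_nonneg hnonneg] at hx ⊢
  have hr : 1 ≤ Real.sqrt ((n : ℝ) / p n) :=
    Real.one_le_sqrt.2 ((one_le_div (by exact_mod_cast hp)).2 (by exact_mod_cast hpn))
  have hF : frobNorm (sampleCov x - Sstar n) < 1 / (2 * K) :=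
    lt_of_pow_lt_pow_left₀ 2 (by positivity)
      ((le_mul_of_one_le_left (sq_nonneg _) hr).trans_lt hx)
  have mul_le_half {t : ℝ} (ht : t < 1 / (2 * K)) : K * t ≤ 1 / 2 :=
    calc K * t ≤ K * (1 / (2 * K)) := by gcongr
      _ = 1 / 2 := by field_simp
  exact abs_supLogDetError_le hp (hSpd n) (isHermitian_sampleCov x) ((hK' n).trans hK'K)
    (mul_le_half hδn) (mul_le_half hF)

section Gaussian

lemma integral_pow_gaussianReal (v : NNReal) (k : ℕ) :
    ∫ x, x ^ k ∂gaussianReal 0 v = Real.sqrt v ^ k * ∫ x, x ^ k ∂gaussianReal 0 1 := by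
  have hv : gaussianReal 0 v = (gaussianReal 0 1).map (Real.sqrt v * ·) := by
    rw [gaussianReal_map_const_mul]
    congr 1
    · simp
    · ext; simp
  rw [hv, integral_map (by fun_prop) (by fun_prop), ← integral_const_mul]
  simp only [mul_pow]

variable {p : ℕ} {μ : Measure (Fin p → ℝ)} {m : Fin p → ℝ} {S : Matrix (Fin p) (Fin p) ℝ}

lemma single_add_single_dotProduct_mulVec (S : Matrix (Fin p) (Fin p) ℝ) (i j : Fin p) :
    (Pi.single i 1 + Pi.single j 1) ⬝ᵥ S *ᵥ (Pi.single i 1 + Pi.single j 1) =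
      S i i + S i j + (S j i + S j j) := by
  rw [mulVec_add, add_dotProduct, dotProduct_add, dotProduct_add]
  simp

namespace IsGaussianLaw

lemma map_eval (hμ : IsGaussianLaw μ m S) (i : Fin p) :
    μ.map (fun x => x i) = gaussianReal (m i) (S i i).toNNReal := by
  simpa [Pi.single_apply] using hμ.2 (Pi.single i 1)

lemma map_eval_add_eval (hμ : IsGaussianLaw μ m S) (i j : Fin p) :
    μ.map (fun x => x i + x j) =
      gaussianReal (m i + m j) (S i i + S i j + (S j i + S j j)).toNNReal := by
  have hsum (x : Fin p → ℝ) :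
      ∑ k, (Pi.single i 1 + Pi.single j 1 : Fin p → ℝ) k * x k = x i + x j := by
    simp [Pi.single_apply, add_mul, Finset.sum_add_distrib]
  have h := hμ.2 (Pi.single i 1 + Pi.single j 1)
  rwa [single_add_single_dotProduct_mulVec, hsum m, funext hsum] at h

lemma memLp_eval (hμ : IsGaussianLaw μ m S) (i : Fin p) (q : NNReal) :
    MemLp (fun x => x i) q μ := by
  have h := memLp_id_gaussianReal (μ := m i) (v := (S i i).toNNReal) q
  rw [← hμ.map_eval i] at h
  exact (memLp_map_measure_iff aestronglyMeasurable_id (measurable_pi_apply i).aemeasurable).1 h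

lemma variance_eval (hμ : IsGaussianLaw μ m S) (hS : S.PosSemidef) (i : Fin p) :
    Var[fun x => x i; μ] = S i i := by
  have h := variance_id_gaussianReal (μ := m i) (v := (S i i).toNNReal)
  rwa [← hμ.map_eval i, variance_id_map (measurable_pi_apply i).aemeasurable,
    Real.coe_toNNReal _ hS.diag_nonneg] at h

lemma variance_eval_add_eval (hμ : IsGaussianLaw μ m S) (hS : S.PosSemidef) (i j : Fin p) :
    Var[fun x => x i + x j; μ] = S i i + S i j + (S j i + S j j) := by
  have hnonneg : 0 ≤ S i i + S i j + (S j i + S j j) := by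
    rw [← single_add_single_dotProduct_mulVec]
    exact hS.dotProduct_mulVec_nonneg _
  have h := variance_id_gaussianReal (μ := m i + m j)
    (v := (S i i + S i j + (S j i + S j j)).toNNReal)
  rwa [← hμ.map_eval_add_eval i j, variance_id_map (by fun_prop),
    Real.coe_toNNReal _ hnonneg] at h

lemma covariance_eval_eval (hμ : IsGaussianLaw μ m S) (hS : S.PosSemidef) (i j : Fin p) :
    cov[fun x => x i, fun x => x j; μ] = S i j := by
  have := hμ.1
  have hadd := variance_fun_add (hμ.memLp_eval i 2) (hμ.memLp_eval j 2)
  rw [hμ.variance_eval_add_eval hS, hμ.variance_eval hS, hμ.variance_eval hS] at hadd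
  have hsymm : S j i = S i j := by simpa using hS.1.apply i j
  linarith

lemma integral_eval (hμ : IsGaussianLaw μ m S) (i : Fin p) : ∫ x, x i ∂μ = m i := by
  have h := integral_id_gaussianReal (μ := m i) (v := (S i i).toNNReal)
  rwa [← hμ.map_eval i, integral_map (measurable_pi_apply i).aemeasurable (by fun_prop)] at h

lemma integral_eval_mul_eval (hμ : IsGaussianLaw μ 0 S) (hS : S.PosSemidef) (i j : Fin p) :
    ∫ x, x i * x j ∂μ = S i j := by
  have := hμ.1
  have h := covariance_eq_sub (hμ.memLp_eval i 2) (hμ.memLp_eval j 2)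
  rw [hμ.covariance_eval_eval hS, hμ.integral_eval] at h
  simpa using h.symm

lemma integral_eval_pow_four (hμ : IsGaussianLaw μ 0 S) (hS : S.PosSemidef) (i : Fin p) :
    ∫ x, x i ^ 4 ∂μ = S i i ^ 2 * ∫ x, x ^ 4 ∂gaussianReal 0 1 := by
  have hsqrt : Real.sqrt (S i i) ^ 4 = S i i ^ 2 := by
    rw [show 4 = 2 * 2 from rfl, pow_mul, Real.sq_sqrt hS.diag_nonneg]
  have h := integral_pow_gaussianReal (S i i).toNNReal 4
  rwa [show (0 : ℝ) = (0 : Fin p → ℝ) i from rfl, ← hμ.map_eval i,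
    integral_map (measurable_pi_apply i).aemeasurable (by fun_prop),
    Real.coe_toNNReal _ hS.diag_nonneg, hsqrt] at h

lemma hasFourthMomentBound (hμ : IsGaussianLaw μ 0 S) (hS : S.PosSemidef) {K : ℝ}
    (hK : specNorm S ≤ K) :
    HasFourthMomentBound μ S (K ^ 2 * ∫ x, x ^ 4 ∂gaussianReal 0 1) where
  isProbabilityMeasure := hμ.1
  memLp_eval i := by simpa using hμ.memLp_eval i 4
  integral_mul := hμ.integral_eval_mul_eval hS
  integral_pow_four_le i := by
    rw [hμ.integral_eval_pow_four hS]
    have : 0 ≤ ∫ x, x ^ 4 ∂gaussianReal 0 1 := integral_nonneg fun x => by positivity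
    gcongr
    · exact hS.diag_nonneg
    · exact (apply_self_le_specNorm S i).trans hK

end IsGaussianLaw

end Gaussian

/-- **Lemma 3.1 (approximate linearity of the log-determinant functional).** -/
theorem logdet_approx_linear
    (p : ℕ → ℕ) (hp : Tendsto p atTop atTop)
    (Sstar : ∀ n, Matrix (Fin (p n)) (Fin (p n)) ℝ)
    (hSpd : ∀ n, (Sstar n).PosDef)
    (gauss : ∀ n, Measure (Fin (p n) → ℝ))
    (hgauss : ∀ n, IsGaussianLaw (gauss n) 0 (Sstar n))
    -- ‖Σ*‖ ∨ ‖Ω*‖ = O(1) and p³/n = o(1)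
    (hbound : BigO1 (fun n => max (specNorm (Sstar n)) (specNorm (Sstar n)⁻¹)))
    (hpn : SmallO1 (fun n => (p n : ℝ) ^ 3 / n))
    (δ : ℕ → ℝ) (hδ : SmallO1 δ) :
    -- sup over {Σ ≻ 0 : √(n/p) ‖Σ-Σ*‖_F² ∨ √p ‖Σ-Σ*‖_F ≤ δ_n} of
    -- √(n/p) |log det Σ - log det Σ̂ - tr((Σ - Σ̂) Ω*)| = o_P(1)
    oP (fun n => iidLaw n (gauss n)) (fun n x =>
      sSup ((fun S => Real.sqrt ((n : ℝ) / p n) *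
          |Real.log S.det - Real.log (sampleCov x).det -
            ((S - sampleCov x) * (Sstar n)⁻¹).trace|) ''
        {S | S.PosDef ∧
          max (Real.sqrt ((n : ℝ) / p n) * frobNorm (S - Sstar n) ^ 2)
            (Real.sqrt (p n) * frobNorm (S - Sstar n)) ≤ δ n})) := by
  obtain ⟨K, hK⟩ := hbound
  exact logdet_approx_linear_general p (hp.eventually_gt_atTop 0) Sstar hSpd gauss _
    (fun n => (hgauss n).hasFourthMomentBound (hSpd n).posSemidef ((le_max_left _ _).trans (hK n)))
    ⟨K, fun n => (le_max_right _ _).trans (hK n)⟩ hpn δ hδ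

end BvMPaper
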